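/- arXiv:math/0703385 — 2 statements merged into one kernel-verified Lean document; each statement's English description precedes it below -/
import Mathlib

section
/- For t ∈ ℝ, the infinite product ∏_{n=0}^{∞} cos(2π(3/4)ⁿ t) (the limit of its partial products) equals zero if and only if t belongs to the set 𝒪 = {4^{n−1}(2m+1)/3ⁿ : n ∈ ℕ₀, m ∈ ℤ}; that is, if and only if t = (1/4)(4/3)ⁿ(2m+1) for some n ∈ ℕ₀ and m ∈ ℤ. -/
/-!
Since `0 ≤ 1 - cos x ≤ x² / 2`, the product of the cosines of a square-summable sequence converges
absolutely, and an absolutely convergent product vanishes only if one of its factors does. For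
`0 < |r| < 1` the arguments `2πrⁿt` form a geometric, hence square-summable, sequence, and the
`n`-th factor vanishes exactly when `2πrⁿt` is an odd multiple of `π/2`.
-/

open Filter

/-- The set `𝒪 = {4^{n−1}(2m+1)/3ⁿ : n ∈ ℕ₀, m ∈ ℤ} = {(1/4)(4/3)ⁿ(2m+1) : n ∈ ℕ₀, m ∈ ℤ}`. -/
def OsetThreeFourths : Set ℝ :=
  {x : ℝ | ∃ (n : ℕ) (m : ℤ), x = (1 / 4) * (4 / 3 : ℝ) ^ n * (2 * (m : ℝ) + 1)}

open scoped Real Topology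

section NormedRing

variable {ι R : Type*} [NormedCommRing R] [NormOneClass R] [CompleteSpace R] {f : ι → R}

theorem multipliable_of_summable_norm_sub_one (hf : Summable fun i ↦ ‖f i - 1‖) :
    Multipliable f := by
  simpa only [add_sub_cancel] using multipliable_one_add_of_summable hf

theorem hasProd_zero_iff_exists_eq_zero [NormMulClass R] (hf : Summable fun i ↦ ‖f i - 1‖) :
    HasProd f 0 ↔ ∃ i, f i = 0 := by
  refine ⟨fun h ↦ ?_, fun h ↦ hasProd_zero_of_exists_eq_zero h⟩
  by_contra! hne
  have htprod : ∏' i, f i ≠ 0 := by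
    simpa only [add_sub_cancel] using
      tprod_one_add_ne_zero_of_summable (f := fun i ↦ f i - 1) (by simpa using hne) hf
  exact htprod h.tprod_eq

theorem tendsto_prod_range_zero_iff_exists_eq_zero [NormMulClass R] {f : ℕ → R}
    (hf : Summable fun n ↦ ‖f n - 1‖) :
    Tendsto (fun N ↦ ∏ n ∈ Finset.range N, f n) atTop (𝓝 0) ↔ ∃ n, f n = 0 := by
  rw [← (multipliable_of_summable_norm_sub_one hf).hasProd_iff_tendsto_nat,
    hasProd_zero_iff_exists_eq_zero hf]

end NormedRing

theorem norm_cos_sub_one_le (x : ℝ) : ‖Real.cos x - 1‖ ≤ x ^ 2 / 2 := by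
  rw [Real.norm_of_nonpos (sub_nonpos.mpr (Real.cos_le_one x))]
  linarith [Real.one_sub_sq_div_two_le_cos (x := x)]

theorem summable_norm_cos_sub_one {ι : Type*} {x : ι → ℝ} (hx : Summable fun i ↦ x i ^ 2) :
    Summable fun i ↦ ‖Real.cos (x i) - 1‖ :=
  (hx.div_const 2).of_nonneg_of_le (fun _ ↦ norm_nonneg _) fun i ↦ norm_cos_sub_one_le (x i)

theorem summable_sq_mul_geometric {r : ℝ} (hr : |r| < 1) (a b : ℝ) :
    Summable fun n : ℕ ↦ (a * r ^ n * b) ^ 2 := by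
  have hr_sq : r ^ 2 < 1 := (sq_lt_one_iff_abs_lt_one r).mpr hr
  simpa only [mul_pow, pow_right_comm] using
    ((summable_geometric_of_lt_one (sq_nonneg r) hr_sq).mul_left (a ^ 2)).mul_right (b ^ 2)

theorem cos_two_pi_mul_mul_eq_zero_iff {c : ℝ} (hc : c ≠ 0) (t : ℝ) :
    Real.cos (2 * π * c * t) = 0 ↔ ∃ m : ℤ, t = 1 / 4 * c⁻¹ * (2 * m + 1) := by
  rw [Real.cos_eq_zero_iff]
  refine exists_congr fun m ↦ ?_
  have hcoeff : 2 * π * c ≠ 0 := mul_ne_zero Real.two_pi_pos.ne' hc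
  have hsol : 2 * π * c * (1 / 4 * c⁻¹ * (2 * m + 1)) = (2 * m + 1) * π / 2 := by
    field_simp
    ring
  rw [← hsol, mul_right_inj' hcoeff]

theorem infinite_product_three_fourths_zero_iff_general {r : ℝ} (hr₀ : r ≠ 0) (hr : |r| < 1)
    (t : ℝ) :
    Tendsto (fun N ↦ ∏ n ∈ Finset.range N, Real.cos (2 * π * r ^ n * t)) atTop (𝓝 0)
      ↔ ∃ (n : ℕ) (m : ℤ), t = 1 / 4 * r⁻¹ ^ n * (2 * m + 1) := by
  rw [tendsto_prod_range_zero_iff_exists_eq_zero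
    (summable_norm_cos_sub_one (summable_sq_mul_geometric hr (2 * π) t))]
  simp only [cos_two_pi_mul_mul_eq_zero_iff (pow_ne_zero _ hr₀), inv_pow]

/-- For `t ∈ ℝ`, the infinite product `∏_{n=0}^{∞} cos(2π(3/4)ⁿ t)` (the limit of its
partial products) equals zero if and only if `t ∈ 𝒪`. -/
theorem infinite_product_three_fourths_zero_iff
    (t : ℝ) :
    Tendsto (fun N : ℕ => ∏ n ∈ Finset.range (N + 1),
        Real.cos (2 * Real.pi * (3 / 4 : ℝ) ^ n * t)) atTop (nhds 0)
      ↔ t ∈ OsetThreeFourths := by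
  have h := infinite_product_three_fourths_zero_iff_general
    (r := 3 / 4) (by norm_num) (by norm_num [abs_lt]) t
  rwa [inv_div, ← tendsto_add_atTop_iff_nat 1] at h
end

section
/- For each k ∈ ℕ with k ≥ 1, the set Λ_k = {4^j/3^k : j ∈ ℕ, j ≥ k−1} ∪ {0} is an infinite set of real numbers with the property that for every pair of distinct elements ℓ, ℓ' ∈ Λ_k, the difference ℓ − ℓ' lies in 𝒪 = {4^{n−1}(2m+1)/3ⁿ : n ∈ ℕ₀, m ∈ ℤ}. Consequently there exist infinitely many infinite sets Λ ⊂ ℝ (the sets Λ_k being pairwise distinct) whose associated exponentials are mutually orthogonal with respect to the Bernoulli convolution measure ν_{3/4}. -/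
/-!
For a measure `ν` invariant under `x ↦ r x ± 1` with equal weights, the characteristic function
satisfies `φ(t) = cos t · φ(r t)`. At `t = 2πx` with `4x` an odd integer the cosine vanishes, and
the relation carries a zero at `t` to `t / r`, so `φ(2πx) = 0` for every `x = o / (4 rⁿ)` with `o`
odd. The inner product of `e_ℓ` and `e_ℓ'` is `φ(2π(ℓ - ℓ'))`, so orthogonality becomes a question
about differences of frequencies.

Let `r = p / q` with `p` odd and `q` even, and consider the frequencies `qʲ / (4 pᵏ)` with `j ≥ k`.
For `k ≤ i < j` the difference `qⁱ (q^(j-i) - 1) / (4 pᵏ)` is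
`(q^(j-i) - 1) p^(i-k) / (4 rⁱ)`, whose numerator is odd, and `qⁱ / (4 pᵏ) = p^(i-k) / (4 rⁱ)`
accounts for differences with `0`. The families with different `k` differ because the least
positive frequency is `(q / p)ᵏ / 4`.
-/

open MeasureTheory
open scoped ENNReal

/-- The set `Λ_k = {4^j/3^k : j ∈ ℕ, j ≥ k−1} ∪ {0}`. -/
def LamSet (k : ℕ) : Set ℝ :=
  {x : ℝ | ∃ j : ℕ, k - 1 ≤ j ∧ x = (4 : ℝ) ^ j / (3 : ℝ) ^ k} ∪ {0}

/-- Invariance of `ν` under the iterated function system `x ↦ r x ± 1` with equal weights, the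
defining equation of the Bernoulli convolution `ν_r`. -/
def IsBernoulliInvariant (r : ℝ) (ν : Measure ℝ) : Prop :=
  ν = (1 / 2 : ℝ≥0∞) • Measure.map (fun x => r * x + 1) ν
    + (1 / 2 : ℝ≥0∞) • Measure.map (fun x => r * x - 1) ν

/-- Mutual orthogonality in `L²(ν)` of the exponentials `e_ℓ(x) = exp(2πiℓx)`, `ℓ ∈ Λ`. -/
def OrthogonalExponentials (ν : Measure ℝ) (Λ : Set ℝ) : Prop :=
  Λ.Pairwise fun ℓ ℓ' =>
    (∫ x : ℝ, Complex.exp (2 * Real.pi * Complex.I * ℓ * x)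
      * (starRingEnd ℂ) (Complex.exp (2 * Real.pi * Complex.I * ℓ' * x)) ∂ν) = 0

/-- The frequencies `o / (4 rⁿ)` with `o` odd, at which the Fourier transform of the Bernoulli
convolution `ν_r` vanishes; for `r = 3 / 4` this is `𝒪`. -/
def bernoulliZeros (r : ℝ) : Set ℝ :=
  {x | ∃ (n : ℕ) (o : ℤ), Odd o ∧ x = o / (4 * r ^ n)}

/-- The frequencies `qʲ / (4 pᵏ)` with `j ≥ k`, together with `0`, which are orthogonal for the
ratio `p / q`. Since `4ʲ / 3ᵏ = 4^(j+1) / (4 · 3ᵏ)`, the case `p = 3`, `q = 4` is `Λ_k` with its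
exponent shifted by one. -/
def frequencySet (p q k : ℕ) : Set ℝ :=
  insert 0 ((fun j : ℕ => (q : ℝ) ^ j / (4 * p ^ k)) '' Set.Ici k)

section CharFun

variable {μ ν : Measure ℝ} {r t : ℝ}

lemma charFun_add_measure [IsFiniteMeasure μ] [IsFiniteMeasure ν] :
    charFun (μ + ν) t = charFun μ t + charFun ν t := by
  simp only [charFun_eq_integral_innerProbChar]
  exact integral_add_measure (BoundedContinuousFunction.integrable _ _)
    (BoundedContinuousFunction.integrable _ _)

lemma charFun_smul_measure (c : ℝ≥0∞) : charFun (c • μ) t = c.toReal * charFun μ t :=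
  (integral_smul_measure _ c).trans Complex.real_smul

lemma charFun_map_mul_add (r c t : ℝ) :
    charFun (μ.map fun x => r * x + c) t
      = Complex.exp (c * t * Complex.I) * charFun μ (r * t) := by
  rw [← charFun_map_mul, mul_comm, show (c * t : ℂ) = (inner ℝ c t : ℝ) by simp [mul_comm],
    ← charFun_map_add_const, Measure.map_map (by fun_prop) (by fun_prop)]
  rfl

lemma IsBernoulliInvariant.charFun_eq [IsFiniteMeasure ν] (hν : IsBernoulliInvariant r ν) (t : ℝ) :
    charFun ν t = Real.cos t * charFun ν (r * t) := by
  have := Measure.smul_finite (ν.map fun x => r * x + 1) (c := 1 / 2) (by simp)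
  have := Measure.smul_finite (ν.map fun x => r * x - 1) (c := 1 / 2) (by simp)
  calc charFun ν t
      = 1 / 2 * charFun (ν.map fun x => r * x + 1) t
        + 1 / 2 * charFun (ν.map fun x => r * x + -1) t := by
        conv_lhs => rw [hν, charFun_add_measure, charFun_smul_measure, charFun_smul_measure]
        simp [sub_eq_add_neg]
    _ = Real.cos t * charFun ν (r * t) := by
        rw [charFun_map_mul_add, charFun_map_mul_add, Complex.ofReal_cos, Complex.cos]
        push_cast
        ring_nf

lemma IsBernoulliInvariant.charFun_eq_zero [IsFiniteMeasure ν] (hν : IsBernoulliInvariant r ν)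
    (hr : r ≠ 0) {x : ℝ} (hx : x ∈ bernoulliZeros r) : charFun ν (2 * Real.pi * x) = 0 := by
  obtain ⟨n, o, ⟨m, rfl⟩, rfl⟩ := hx
  induction n with
  | zero =>
    have hcos : Real.cos (2 * Real.pi * ((2 * m + 1 : ℤ) / (4 * r ^ 0))) = 0 :=
      Real.cos_eq_zero_iff.2 ⟨m, by push_cast; ring⟩
    rw [hν.charFun_eq, hcos, Complex.ofReal_zero, zero_mul]
  | succ n ih =>
    have hrescale : r * (2 * Real.pi * ((2 * m + 1 : ℤ) / (4 * r ^ (n + 1))))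
        = 2 * Real.pi * ((2 * m + 1 : ℤ) / (4 * r ^ n)) := by
      field_simp
      ring
    rw [hν.charFun_eq, hrescale, ih, mul_zero]

lemma integral_exp_mul_conj_exp (ν : Measure ℝ) (ℓ ℓ' : ℝ) :
    (∫ x : ℝ, Complex.exp (2 * Real.pi * Complex.I * ℓ * x)
      * (starRingEnd ℂ) (Complex.exp (2 * Real.pi * Complex.I * ℓ' * x)) ∂ν)
      = charFun ν (2 * Real.pi * (ℓ - ℓ')) := by
  rw [charFun_apply_real]
  congr with x
  rw [← Complex.exp_conj, ← Complex.exp_add]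
  simp only [map_mul, Complex.conj_ofReal, Complex.conj_I, map_ofNat]
  push_cast
  ring_nf

lemma IsBernoulliInvariant.orthogonalExponentials [IsFiniteMeasure ν]
    (hν : IsBernoulliInvariant r ν) (hr : r ≠ 0) {Λ : Set ℝ}
    (hΛ : Λ.Pairwise fun ℓ ℓ' => ℓ - ℓ' ∈ bernoulliZeros r) : OrthogonalExponentials ν Λ :=
  hΛ.imp fun ℓ ℓ' h => (integral_exp_mul_conj_exp ν ℓ ℓ').trans (hν.charFun_eq_zero hr h)

end CharFun

section Frequencies

variable {p q k : ℕ}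

lemma neg_mem_bernoulliZeros {r x : ℝ} (hx : x ∈ bernoulliZeros r) : -x ∈ bernoulliZeros r := by
  obtain ⟨n, o, ho, rfl⟩ := hx
  exact ⟨n, -o, ho.neg, by push_cast; ring⟩

lemma odd_mul_pow_div_mem_bernoulliZeros (hp : Odd p) {i : ℕ} (hki : k ≤ i) {o : ℤ} (ho : Odd o) :
    o * ((q : ℝ) ^ i / (4 * p ^ k)) ∈ bernoulliZeros (p / q) := by
  have hp0 : (p : ℝ) ≠ 0 := Nat.cast_ne_zero.2 hp.pos.ne'
  refine ⟨i, o * p ^ (i - k), ho.mul (hp.natCast.pow), ?_⟩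
  push_cast
  rw [div_pow, ← pow_sub_mul_pow (p : ℝ) hki]
  field_simp

lemma pow_div_sub_pow_div_mem_bernoulliZeros (hp : Odd p) (hq : Even q) {i j : ℕ} (hki : k ≤ i)
    (hij : i < j) :
    (q : ℝ) ^ j / (4 * p ^ k) - q ^ i / (4 * p ^ k) ∈ bernoulliZeros (p / q) := by
  have ho : Odd ((q : ℤ) ^ (j - i) - 1) :=
    (hq.natCast.pow_of_ne_zero (Nat.sub_ne_zero_of_lt hij)).sub_odd odd_one
  convert odd_mul_pow_div_mem_bernoulliZeros hp hki ho using 1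
  push_cast
  rw [← pow_sub_mul_pow (q : ℝ) hij.le]
  ring

lemma pairwise_sub_mem_bernoulliZeros (hp : Odd p) (hq : Even q) (k : ℕ) :
    (frequencySet p q k).Pairwise fun ℓ ℓ' => ℓ - ℓ' ∈ bernoulliZeros (p / q) := by
  refine Set.pairwise_insert.2 ⟨?_, ?_⟩
  · rintro _ ⟨j, hj, rfl⟩ _ ⟨i, hi, rfl⟩ hne
    rcases lt_trichotomy i j with hij | rfl | hji
    · exact pow_div_sub_pow_div_mem_bernoulliZeros hp hq hi hij
    · exact absurd rfl hne
    · rw [← neg_sub]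
      exact neg_mem_bernoulliZeros (pow_div_sub_pow_div_mem_bernoulliZeros hp hq hj hji)
  · rintro _ ⟨j, hj, rfl⟩ -
    have hmem : (q : ℝ) ^ j / (4 * p ^ k) ∈ bernoulliZeros (p / q) := by
      simpa using odd_mul_pow_div_mem_bernoulliZeros hp hj odd_one
    simpa using And.intro (neg_mem_bernoulliZeros hmem) hmem

lemma frequencySet_infinite (hp : 0 < p) (hq : 1 < q) (k : ℕ) : (frequencySet p q k).Infinite := by
  have hinj : Function.Injective fun j : ℕ => (q : ℝ) ^ j / (4 * p ^ k) := fun i j hij =>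
    pow_right_injective₀ (by positivity) (by exact_mod_cast hq.ne')
      ((div_left_inj' (by positivity)).1 hij)
  exact ((Set.Ici_infinite k).image hinj.injOn).mono (Set.subset_insert _ _)

lemma isLeast_pos_frequencySet (hp : 0 < p) (hq : 0 < q) (k : ℕ) :
    IsLeast {x ∈ frequencySet p q k | 0 < x} ((q / p : ℝ) ^ k / 4) := by
  have hval : (q / p : ℝ) ^ k / 4 = q ^ k / (4 * p ^ k) := by
    rw [div_pow, div_div, mul_comm]
  rw [hval]
  refine ⟨⟨Or.inr ⟨k, Set.self_mem_Ici, rfl⟩, by positivity⟩, ?_⟩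
  rintro x ⟨rfl | ⟨j, hj : k ≤ j, rfl⟩, hpos⟩
  · exact absurd hpos (lt_irrefl 0)
  · have hq1 : (1 : ℝ) ≤ q := by exact_mod_cast hq
    dsimp only
    gcongr

lemma frequencySet_injective (hp : 0 < p) (hpq : p < q) :
    Function.Injective (frequencySet p q) := by
  intro k k' h
  have hratio : 1 < (q / p : ℝ) := (one_lt_div (by positivity)).2 (by exact_mod_cast hpq)
  have hleast := isLeast_pos_frequencySet hp (hp.trans hpq) k
  rw [h] at hleast
  have heq := hleast.unique (isLeast_pos_frequencySet hp (hp.trans hpq) k')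
  exact (pow_right_strictMono₀ hratio).injective ((div_left_inj' four_ne_zero).1 heq)

end Frequencies

theorem infinitely_many_infinite_orthogonal_families_general {p q : ℕ} (hp : Odd p) (hq : Even q)
    (hpq : p < q) {ν : Measure ℝ} [IsFiniteMeasure ν] (hν : IsBernoulliInvariant (p / q) ν) :
    (∀ k, (frequencySet p q k).Infinite) ∧
    (∀ k, (frequencySet p q k).Pairwise fun ℓ ℓ' => ℓ - ℓ' ∈ bernoulliZeros (p / q)) ∧
    (∀ k, OrthogonalExponentials ν (frequencySet p q k)) ∧
    Function.Injective (frequencySet p q) ∧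
    {Λ : Set ℝ | Λ.Infinite ∧ OrthogonalExponentials ν Λ}.Infinite := by
  have hr : (p / q : ℝ) ≠ 0 :=
    div_ne_zero (Nat.cast_ne_zero.2 hp.pos.ne') (Nat.cast_ne_zero.2 (hp.pos.trans hpq).ne')
  have hinf := frequencySet_infinite hp.pos (Nat.lt_of_le_of_lt hp.pos hpq)
  have hsub := pairwise_sub_mem_bernoulliZeros hp hq
  have horth k := hν.orthogonalExponentials hr (hsub k)
  have hinj := frequencySet_injective hp.pos hpq
  exact ⟨hinf, hsub, horth, hinj,
    Set.infinite_of_injective_forall_mem hinj fun k => ⟨hinf k, horth k⟩⟩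

lemma bernoulliZeros_three_fourths : bernoulliZeros (3 / 4) = OsetThreeFourths := by
  have hval (n : ℕ) (m : ℤ) : ((2 * m + 1 : ℤ) : ℝ) / (4 * (3 / 4) ^ n)
      = 1 / 4 * (4 / 3) ^ n * (2 * m + 1) := by
    push_cast
    rw [← inv_div 4 (3 : ℝ), inv_pow]
    field_simp
  ext x
  constructor
  · rintro ⟨n, _, ⟨m, rfl⟩, rfl⟩
    exact ⟨n, m, hval n m⟩
  · rintro ⟨n, m, rfl⟩
    exact ⟨n, 2 * m + 1, odd_two_mul_add_one m, (hval n m).symm⟩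

lemma frequencySet_three_four {k : ℕ} (hk : 1 ≤ k) : frequencySet 3 4 k = LamSet k := by
  have hval (j : ℕ) : (4 : ℝ) ^ (j + 1) / (4 * 3 ^ k) = 4 ^ j / 3 ^ k := by
    field_simp
    ring
  rw [frequencySet, LamSet, Set.union_singleton]
  congr 1
  ext x
  constructor
  · rintro ⟨j, hj : k ≤ j, rfl⟩
    obtain ⟨i, rfl⟩ := Nat.exists_eq_add_of_le' (hk.trans hj)
    exact ⟨i, by omega, by exact_mod_cast hval i⟩
  · rintro ⟨j, hj, rfl⟩
    exact ⟨j + 1, Set.mem_Ici.2 (by omega), by exact_mod_cast hval j⟩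

/-- For each `k ≥ 1`, the set `Λ_k` is an infinite set whose pairwise differences of
distinct elements lie in `𝒪`; the sets `Λ_k` are pairwise distinct, and consequently
there are infinitely many infinite sets `Λ ⊆ ℝ` whose associated exponentials are
mutually orthogonal with respect to the Bernoulli convolution measure `ν_{3/4}`. -/
theorem infinitely_many_infinite_orthogonal_families
    (ν : Measure ℝ) [IsProbabilityMeasure ν]
    (hatom : ∀ x : ℝ, ν {x} = 0)
    (hinv : ν = (1 / 2 : ℝ≥0∞) • Measure.map (fun x : ℝ => (3 / 4 : ℝ) * x + 1) ν
              + (1 / 2 : ℝ≥0∞) • Measure.map (fun x : ℝ => (3 / 4 : ℝ) * x - 1) ν) :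
    (∀ k : ℕ, 1 ≤ k → (LamSet k).Infinite) ∧
    (∀ k : ℕ, 1 ≤ k → ∀ ℓ ∈ LamSet k, ∀ ℓ' ∈ LamSet k, ℓ ≠ ℓ' →
      ℓ - ℓ' ∈ OsetThreeFourths) ∧
    (∀ k : ℕ, 1 ≤ k → ∀ ℓ ∈ LamSet k, ∀ ℓ' ∈ LamSet k, ℓ ≠ ℓ' →
      (∫ x : ℝ, Complex.exp (2 * Real.pi * Complex.I * ℓ * x)
        * (starRingEnd ℂ) (Complex.exp (2 * Real.pi * Complex.I * ℓ' * x)) ∂ν) = 0) ∧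
    (∀ k k' : ℕ, 1 ≤ k → 1 ≤ k' → k ≠ k' → LamSet k ≠ LamSet k') ∧
    {Λ : Set ℝ | Λ.Infinite ∧ ∀ ℓ ∈ Λ, ∀ ℓ' ∈ Λ, ℓ ≠ ℓ' →
      (∫ x : ℝ, Complex.exp (2 * Real.pi * Complex.I * ℓ * x)
        * (starRingEnd ℂ) (Complex.exp (2 * Real.pi * Complex.I * ℓ' * x)) ∂ν) = 0}.Infinite := by
  obtain ⟨hinf, hsub, horth, hinj, hmany⟩ :=
    infinitely_many_infinite_orthogonal_families_general (p := 3) (q := 4) (by decide) (by decide)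
      (by norm_num) (ν := ν) (by exact_mod_cast hinv)
  refine ⟨fun k hk => frequencySet_three_four hk ▸ hinf k, fun k hk => ?_,
    fun k hk => frequencySet_three_four hk ▸ horth k, fun k k' hk hk' hne => ?_, hmany⟩
  · rw [← frequencySet_three_four hk, ← bernoulliZeros_three_fourths]
    exact_mod_cast hsub k
  · rw [← frequencySet_three_four hk, ← frequencySet_three_four hk']
    exact hinj.ne hne
end
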